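/- Let m ≥ 0 be an integer and a₀ ≥ 2, a₁,…,a_m ≥ 1 integers; set r_{−1} := 1, r_k := a₀⋯a_k, μ_{−1} := 1, μ_k := r_k − μ_{k−1}, μ := μ_m, and rational weights w_k := μ_{k−1}/r_k for 0 ≤ k ≤ m. Let k₀ ∈ {1,2} with k₀ ≡ m+1 (mod 2) (i.e. k₀ = 1 if m is even, k₀ = 2 if m is odd). Let p ∈ ℤ[x] be the quotient of ∏_{k ∈ {−1,…,m}, m−k even} (x^{r_k} − 1) by ∏_{k ∈ {−1,…,m}, m−k odd} (x^{r_k} − 1); p is monic of degree μ with only simple roots, all on the unit circle. Let 0 ≤ β₁ < β₂ < ⋯ < β_μ < 1 be the increasing enumeration of all β ∈ [0,1) with p(e^{−2πiβ}) = 0, and set α_j := μ·β_j − j + k₀/2 for 1 ≤ j ≤ μ. Then the following identity holds in the group algebra over ℤ of the additive group ℚ (writing t^q for the basis element corresponding to q ∈ ℚ): (Σ_{j=1}^μ t^{α_j + (m−1)/2 + 1}) · ∏_{k=0}^m (t^{w_k} − 1) = ∏_{k=0}^m (t^1 − t^{w_k}). -/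

import Mathlib

open Polynomial

/-- `r_k = a₀ a₁ ⋯ a_k` for `k ≥ 0`. -/
def rr (a : ℕ → ℕ) (k : ℕ) : ℕ := ∏ i ∈ Finset.range (k + 1), a i

/-- Shifted version: `rr' a k = r_{k-1}`, with `r_{-1} = 1`. -/
def rr' (a : ℕ → ℕ) : ℕ → ℕ
  | 0 => 1
  | k + 1 => rr a k

/-- `μ_k = r_k - μ_{k-1}` with `μ_{-1} = 1` (so `μ_0 = a₀ - 1`). -/
def mu (a : ℕ → ℕ) : ℕ → ℤ
  | 0 => (a 0 : ℤ) - 1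
  | k + 1 => (rr a (k + 1) : ℤ) - mu a k

/-- The weights `w_k = μ_{k-1} / r_k` (so `w_0 = 1/a₀`). -/
def ww (a : ℕ → ℕ) : ℕ → ℚ
  | 0 => 1 / (a 0 : ℚ)
  | k + 1 => (mu a k : ℚ) / (rr a (k + 1) : ℚ)

open Classical in
/-- The grid of multiples of `1 / rr' a k` in `[0,1)`. -/
noncomputable def GG (a : ℕ → ℕ) (k : ℕ) : Finset ℝ :=
  (Finset.range (rr' a k)).image (fun s : ℕ => (s : ℝ) / (rr' a k : ℝ))

open Classical in
/-- The set of the `β`s (shifted index). -/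
noncomputable def BB (a : ℕ → ℕ) : ℕ → Finset ℝ
  | 0 => GG a 0
  | k + 1 => GG a (k + 1) \ BB a k

/-- Shifted `mu`. -/
def mu' (a : ℕ → ℕ) : ℕ → ℤ
  | 0 => 1
  | k + 1 => mu a k

open Classical in
/-- Counting function. -/
noncomputable def NN (a : ℕ → ℕ) (k : ℕ) (x : ℝ) : ℕ := ((BB a k).filter (fun b => b ≤ x)).card

/-- Shifted discrepancy. -/
noncomputable def DD (a : ℕ → ℕ) (k : ℕ) (x : ℝ) : ℝ := (mu' a k : ℝ) * x - (NN a k x : ℝ)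

/-- Exponent shift. -/
noncomputable def cc : ℕ → ℝ
  | 0 => 1
  | k + 1 => (k : ℝ) + 2 - cc k

lemma rr'_succ (a : ℕ → ℕ) (k : ℕ) : rr' a (k + 1) = rr' a k * a k := by
  cases k with
  | zero => simp [rr', rr]
  | succ k => simp [rr', rr, Finset.prod_range_succ]

lemma rr'_pos (a : ℕ → ℕ) (k : ℕ) (h : ∀ j < k, 1 ≤ a j) : 0 < rr' a k := by
  induction k with
  | zero => simp [rr']
  | succ k ih =>
    rw [rr'_succ]
    exact Nat.mul_pos (ih fun j hj => h j (by omega)) (h k (by omega))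

lemma mu'_succ (a : ℕ → ℕ) (k : ℕ) : mu' a (k + 1) = (rr' a (k + 1) : ℤ) - mu' a k := by
  cases k with
  | zero => simp [mu', mu, rr', rr]
  | succ k => simp [mu', mu, rr']

lemma ww_eq (a : ℕ → ℕ) (k : ℕ) : (ww a k : ℝ) = (mu' a k : ℝ) / (rr' a (k + 1) : ℝ) := by
  cases k with
  | zero => simp [mu', ww, rr', rr]
  | succ k => simp [mu', ww, rr']

lemma mem_GG {a : ℕ → ℕ} {k : ℕ} {x : ℝ} :
    x ∈ GG a k ↔ ∃ s < rr' a k, (s : ℝ) / (rr' a k : ℝ) = x := by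
  simp [GG]

lemma BB_sub_GG (a : ℕ → ℕ) (k : ℕ) : BB a k ⊆ GG a k := by
  cases k with
  | zero => simp [BB]
  | succ k => simp only [BB]; exact Finset.sdiff_subset

lemma GG_sub (a : ℕ → ℕ) (k : ℕ) (h : ∀ j < k + 1, 1 ≤ a j) : GG a k ⊆ GG a (k + 1) := by
  intro x hx
  obtain ⟨s, hs, rfl⟩ := mem_GG.1 hx
  refine mem_GG.2 ⟨s * a k, ?_, ?_⟩
  · rw [rr'_succ]
    exact Nat.mul_lt_mul_of_pos_right hs (h k (by omega))
  · have h1 : (a k : ℝ) ≠ 0 := by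
      have := h k (by omega)
      positivity
    rw [rr'_succ]; push_cast
    rw [mul_div_mul_right _ _ h1]

lemma BB_sub_succ (a : ℕ → ℕ) (k : ℕ) (h : ∀ j < k + 1, 1 ≤ a j) : BB a k ⊆ GG a (k + 1) :=
  (BB_sub_GG a k).trans (GG_sub a k h)

lemma grid_inj (a : ℕ → ℕ) (k : ℕ) (h : ∀ j < k, 1 ≤ a j) :
    Function.Injective (fun s : ℕ => (s : ℝ) / (rr' a k : ℝ)) := by
  intro s t hst
  have h1 : (rr' a k : ℝ) ≠ 0 := by
    have := rr'_pos a k h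
    positivity
  simp only at hst
  rw [div_left_inj' h1] at hst
  exact_mod_cast hst

lemma sum_GG {M : Type*} [AddCommMonoid M] (a : ℕ → ℕ) (k : ℕ) (h : ∀ j < k, 1 ≤ a j)
    (f : ℝ → M) :
    ∑ g ∈ GG a k, f g = ∑ s ∈ Finset.range (rr' a k), f ((s : ℝ) / (rr' a k : ℝ)) := by
  unfold GG
  rw [Finset.sum_image]
  exact fun s _ t _ hst => grid_inj a k h hst

lemma NN_add (a : ℕ → ℕ) (k : ℕ) (h : ∀ j < k + 1, 1 ≤ a j) (s : ℕ) (hs : s < rr' a (k + 1)) :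
    NN a (k + 1) ((s : ℝ) / (rr' a (k + 1) : ℝ)) + NN a k ((s : ℝ) / (rr' a (k + 1) : ℝ))
      = s + 1 := by
  classical
  have hr : (0 : ℝ) < (rr' a (k + 1) : ℝ) := by exact_mod_cast rr'_pos a (k + 1) h
  set x := (s : ℝ) / (rr' a (k + 1) : ℝ) with hx
  have h1 : ((GG a (k + 1)).filter (fun b => b ≤ x)).card = s + 1 := by
    have : (GG a (k + 1)).filter (fun b => b ≤ x)
        = (Finset.range (s + 1)).image (fun s : ℕ => (s : ℝ) / (rr' a (k + 1) : ℝ)) := by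
      ext b
      simp only [Finset.mem_filter, mem_GG, Finset.mem_image, Finset.mem_range]
      constructor
      · rintro ⟨⟨u, hu, rfl⟩, hb⟩
        rw [hx, div_le_div_iff_of_pos_right hr] at hb
        have : u ≤ s := by exact_mod_cast hb
        exact ⟨u, by omega, rfl⟩
      · rintro ⟨u, hu, rfl⟩
        refine ⟨⟨u, by omega, rfl⟩, ?_⟩
        rw [hx, div_le_div_iff_of_pos_right hr]
        have : u ≤ s := by omega
        exact_mod_cast this
    rw [this, Finset.card_image_of_injective _ (grid_inj a (k + 1) h), Finset.card_range]
  rw [← h1]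
  unfold NN
  rw [← Finset.card_union_of_disjoint, ← Finset.filter_union]
  · simp only [BB]
    rw [Finset.sdiff_union_of_subset (BB_sub_succ a k h)]
  · apply Finset.disjoint_filter_filter
    simp only [BB]
    exact Finset.sdiff_disjoint

lemma DD_succ (a : ℕ → ℕ) (k : ℕ) (h : ∀ j < k + 1, 1 ≤ a j) (x : ℝ) (hx : x ∈ GG a (k + 1)) :
    DD a (k + 1) x = -1 - DD a k x := by
  obtain ⟨s, hs, rfl⟩ := mem_GG.1 hx
  have hr : (0 : ℝ) < (rr' a (k + 1) : ℝ) := by exact_mod_cast rr'_pos a (k + 1) h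
  have h1 := NN_add a k h s hs
  have h2 : (NN a (k + 1) ((s : ℝ) / (rr' a (k + 1) : ℝ)) : ℝ)
    = s + 1 - NN a k ((s : ℝ) / (rr' a (k + 1) : ℝ)) := by
    rw [eq_sub_iff_add_eq]; exact_mod_cast h1
  unfold DD
  rw [h2, mu'_succ]
  push_cast
  have h3 : (rr' a (k + 1) : ℝ) * ((s : ℝ) / (rr' a (k + 1) : ℝ)) = s := by field_simp
  linear_combination h3

lemma NN_const (a : ℕ → ℕ) (k : ℕ) (h : ∀ j < k + 1, 1 ≤ a j) (s q : ℕ) (hq : q < a k) :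
    NN a k (((a k * s + q : ℕ) : ℝ) / (rr' a (k + 1) : ℝ)) = NN a k ((s : ℝ) / (rr' a k : ℝ)) := by
  unfold NN
  congr 1
  apply Finset.filter_congr
  intro b hb
  obtain ⟨u, hu, rfl⟩ := mem_GG.1 (BB_sub_GG a k hb)
  have hr : 0 < rr' a k := rr'_pos a k fun j hj => h j (by omega)
  have hr' : (0 : ℝ) < (rr' a k : ℝ) := by exact_mod_cast hr
  have ha : (0 : ℝ) < (a k : ℝ) := by exact_mod_cast h k (by omega)
  rw [rr'_succ, div_le_div_iff_of_pos_right hr']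
  push_cast
  rw [div_le_div_iff₀ hr' (by positivity)]
  have : (u : ℝ) * (rr' a k * a k) ≤ (a k * s + q) * rr' a k ↔ (u : ℝ) * a k ≤ a k * s + q := by
    rw [show (u : ℝ) * (rr' a k * a k) = (u * a k) * rr' a k by ring]
    exact mul_le_mul_iff_of_pos_right hr'
  rw [this]
  constructor
  · intro h1
    have h2 : u * a k ≤ a k * s + q := by exact_mod_cast h1
    have : u ≤ s := by
      by_contra hlt
      have : s + 1 ≤ u := by omega
      nlinarith
    exact_mod_cast this
  · intro h1
    nlinarith [(Nat.cast_nonneg q : (0:ℝ) ≤ q)]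

lemma DD_const (a : ℕ → ℕ) (k : ℕ) (h : ∀ j < k + 1, 1 ≤ a j) (s q : ℕ) (hq : q < a k) :
    DD a k (((a k * s + q : ℕ) : ℝ) / (rr' a (k + 1) : ℝ))
      = DD a k ((s : ℝ) / (rr' a k : ℝ)) + q * (ww a k : ℝ) := by
  unfold DD
  rw [NN_const a k h s q hq, ww_eq, rr'_succ]
  have hr : 0 < rr' a k := rr'_pos a k fun j hj => h j (by omega)
  have hr' : (0 : ℝ) < (rr' a k : ℝ) := by exact_mod_cast hr
  have ha : (0 : ℝ) < (a k : ℝ) := by exact_mod_cast h k (by omega)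
  push_cast
  field_simp
  ring

lemma sum_range_mul' {M : Type*} [AddCommMonoid M] (f : ℕ → M) (n r : ℕ) :
    ∑ s ∈ Finset.range (r * n), f s
      = ∑ s ∈ Finset.range r, ∑ q ∈ Finset.range n, f (n * s + q) := by
  induction r with
  | zero => simp
  | succ r ih =>
    rw [Nat.succ_mul, Finset.sum_range_add, ih, Finset.sum_range_succ, Nat.mul_comm r n]

lemma geomT {R : Type*} [CommRing R] (T : ℝ → R) (hT : ∀ x y, T (x + y) = T x * T y)
    (h0 : T 0 = 1) (w : ℝ) (n : ℕ) :
    (∑ q ∈ Finset.range n, T (-1 - q * w)) * (T w - 1) = T (w - 1) * (1 - T (-(n * w))) := by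
  induction n with
  | zero => simp [h0]
  | succ n ih =>
    rw [Finset.sum_range_succ, add_mul, ih]
    have e1 : T (-1 - n * w) * T w = T (w - 1) * T (-(n * w)) := by
      rw [← hT, ← hT]; congr 1; ring
    have e2 : T (-1 - n * w) = T (w - 1) * T (-(((n + 1 : ℕ) : ℝ) * w)) := by
      rw [← hT]; congr 1; push_cast; ring
    linear_combination e1 - e2

lemma F_rec {R : Type*} [CommRing R] (T : ℝ → R) (hT : ∀ x y, T (x + y) = T x * T y)
    (h0 : T 0 = 1) (a : ℕ → ℕ) (k : ℕ) (h : ∀ j < k + 1, 1 ≤ a j) :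
    (∑ g ∈ GG a (k + 1), T (DD a (k + 1) g)) * (T (ww a k) - 1)
      = T (ww a k - 1) * (1 - T (-(a k * ww a k))) * ∑ g ∈ GG a k, T (-(DD a k g)) := by
  rw [← geomT T hT h0, Finset.sum_congr rfl fun g hg => by rw [DD_succ a k h g hg], sum_GG a _ h,
    sum_GG a k fun j hj => h j (by omega), rr'_succ, sum_range_mul', ← rr'_succ]
  rw [mul_right_comm]
  congr 1
  rw [mul_comm, Finset.sum_mul]
  refine Finset.sum_congr rfl fun s _ => ?_
  rw [Finset.mul_sum]
  refine Finset.sum_congr rfl fun q hq => ?_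
  rw [DD_const a k h s q (Finset.mem_range.1 hq), ← hT]
  congr 1; ring

lemma GG_zero (a : ℕ → ℕ) : GG a 0 = {0} := by
  ext; simp [GG, rr']

lemma BB_zero (a : ℕ → ℕ) : BB a 0 = {0} := by
  simp [BB, GG_zero]

lemma DD_zero (a : ℕ → ℕ) : DD a 0 0 = -1 := by
  classical
  simp [DD, NN, BB_zero, Finset.filter_singleton]

lemma aw_succ (a : ℕ → ℕ) (k : ℕ) (h : ∀ j < k + 2, 1 ≤ a j) :
    (a (k + 1) : ℝ) * (ww a (k + 1) : ℝ) = 1 - (ww a k : ℝ) := by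
  rw [ww_eq, ww_eq, rr'_succ a (k + 1), mu'_succ]
  have hr' : (0 : ℝ) < (rr' a (k + 1) : ℝ) := by
    exact_mod_cast rr'_pos a (k + 1) fun j hj => h j (by omega)
  have ha : (0 : ℝ) < (a (k + 1) : ℝ) := by exact_mod_cast h (k + 1) (by omega)
  push_cast
  field_simp

lemma prod_neg {R : Type*} [CommRing R] (T : ℝ → R) (hT : ∀ x y, T (x + y) = T x * T y)
    (h0 : T 0 = 1) (w : ℕ → ℝ) (k : ℕ) :
    (∏ i ∈ Finset.range k, (T (-1) - T (-(w i)))) * ∏ i ∈ Finset.range k, T (w i) =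
      T (-k) * (-1) ^ k * ∏ i ∈ Finset.range k, (T 1 - T (w i)) := by
  induction k with
  | zero => simp [h0]
  | succ k ih =>
    rw [Finset.prod_range_succ, Finset.prod_range_succ, Finset.prod_range_succ, pow_succ]
    have e : T (-((k + 1 : ℕ) : ℝ)) = T (-k) * T (-1) := by rw [← hT]; congr 1; push_cast; ring
    have e2 : T (-(w k)) * T (w k) = 1 := by rw [← hT]; simp [h0]
    have e3 : T (-1) * T 1 = 1 := by rw [← hT]; simp [h0]
    rw [e]
    have e4 : (T (-1) - T (-(w k))) * T (w k) = T (-1) * (-1) * (T 1 - T (w k)) := by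
      linear_combination e3 - e2
    linear_combination ((T (-1) - T (-(w k))) * T (w k)) * ih
      + (T (-k) * (-1) ^ k * ∏ i ∈ Finset.range k, (T 1 - T (w i))) * e4

lemma prod_neg2 {R : Type*} [CommRing R] (T : ℝ → R) (hT : ∀ x y, T (x + y) = T x * T y)
    (h0 : T 0 = 1) (w : ℕ → ℝ) (k : ℕ) :
    (∏ i ∈ Finset.range k, (T (-(w i)) - 1)) * ∏ i ∈ Finset.range k, T (w i) =
      (-1) ^ k * ∏ i ∈ Finset.range k, (T (w i) - 1) := by
  rw [← Finset.prod_mul_distrib, ← Finset.card_range k, ← Finset.prod_const, Finset.card_range,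
    ← Finset.prod_mul_distrib]
  refine Finset.prod_congr rfl fun i _ => ?_
  have e2 : T (-(w i)) * T (w i) = 1 := by rw [← hT]; simp [h0]
  linear_combination e2

lemma neg_one_pow_cancel {R : Type*} [CommRing R] (k : ℕ) {x y : R}
    (h : (-1) ^ k * x = (-1) ^ k * y) : x = y := by
  rcases neg_one_pow_eq_or R k with h1 | h1 <;> rw [h1] at h <;> simpa using h

lemma F_formula {R : Type*} [CommRing R] (a : ℕ → ℕ) (k : ℕ) :
    ∀ (T : ℝ → R) (_ : ∀ x y, T (x + y) = T x * T y) (_ : T 0 = 1)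
    (_ : ∀ j < k + 1, 1 ≤ a j),
    (∑ g ∈ GG a (k + 1), T (DD a (k + 1) g)) * ∏ i ∈ Finset.range (k + 1), (T (ww a i) - 1)
      = T (-(cc (k + 1))) * (∏ i ∈ Finset.range k, (T 1 - T (ww a i))) * T (ww a k) * (T 1 - 1) := by
  induction k with
  | zero =>
    intro T hT h0 h
    have h1 := F_rec T hT h0 a 0 h
    have e : (a 0 : ℝ) * (ww a 0 : ℝ) = 1 := by
      have : (a 0 : ℝ) ≠ 0 := by have := h 0 (by omega); positivity
      simp [ww, this]
    rw [e] at h1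
    simp only [zero_add, Finset.prod_range_one, Finset.prod_range_zero] at h1 ⊢
    rw [h1, GG_zero, Finset.sum_singleton, DD_zero]
    have e2 : cc 1 = 1 := by norm_num [cc]
    have e3 : T (-1) * T 1 = 1 := by rw [← hT]; simp [h0]
    have e4 : T (ww a 0 - 1) = T (ww a 0) * T (-1) := by rw [← hT]; rfl
    rw [e2, e4, neg_neg]
    linear_combination (T (ww a 0) * (1 - T (-1)) - T (ww a 0)) * e3
  | succ k ih =>
    intro T hT h0 h
    have h1 := F_rec T hT h0 a (k + 1) h
    have h2 := ih (fun x => T (-x)) (fun x y => by rw [← hT]; congr 1; ring) (by simp [h0])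
      (fun j hj => h j (by omega))
    simp only [neg_neg] at h2
    rw [aw_succ a k h] at h1
    rw [Finset.prod_range_succ, mul_comm (∏ i ∈ _, _) (T _ - 1), ← mul_assoc, h1]
    have p1 := prod_neg T hT h0 (fun i => (ww a i : ℝ)) k
    have p2 := prod_neg2 T hT h0 (fun i => (ww a i : ℝ)) (k + 1)
    apply neg_one_pow_cancel (k + 1)
    rw [mul_left_comm, ← p2, Finset.prod_range_succ (fun i => T (1:ℝ) - T (ww a i))]
    rw [Finset.prod_range_succ (fun i => T (ww a i))]
    have c1 : T (-cc (k + 2)) = T (cc (k + 1)) * T (-k) * T (-1) * T (-1) * T (-1) := by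
      rw [← hT, ← hT, ← hT, ← hT]; congr 1; simp only [cc]; push_cast; ring
    have e4 : T (ww a (k + 1) - 1) = T (ww a (k + 1)) * T (-1) := by rw [← hT]; rfl
    have e5 : T (-(1 - (ww a k : ℝ))) = T (-1) * T (ww a k) := by
      rw [← hT]; congr 1; ring
    have e3 : T (-1) * T 1 = 1 := by rw [← hT]; simp [h0]
    have e2 : T (-(ww a k : ℝ)) * T (ww a k) = 1 := by rw [← hT]; simp [h0]
    rw [show k + 1 + 1 = k + 2 from rfl, c1, e4, e5]
    set PW := ∏ i ∈ Finset.range k, T (ww a i)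
    set Pm := ∏ i ∈ Finset.range k, (T (-1) - T (-(ww a i : ℝ)))
    set Pp := ∏ i ∈ Finset.range k, (T 1 - T (ww a i : ℝ))
    set Q := ∏ i ∈ Finset.range (k + 1), (T (-(ww a i : ℝ)) - 1)
    set F := ∑ g ∈ GG a (k + 1), T (-(DD a (k + 1) g))
    set u := T (ww a k : ℝ)
    set v := T (-(ww a k : ℝ))
    set x := T (ww a (k + 1) : ℝ)
    set y := T (-1)
    set z := T 1
    set c := T (cc (k + 1))
    set d := T (-(k : ℝ))
    calc x * y * (1 - y * u) * F * (Q * (PW * u))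
        = x * y * (1 - y * u) * PW * u * (F * Q) := by ring
      _ = x * y * (1 - y * u) * (y - 1) * c * (v * u) * (Pm * PW) := by rw [h2]; ring
      _ = x * y * (y * z - y * u) * (y - y * z) * c * (d * (-1) ^ k * Pp) := by
          rw [e2, p1, e3]; ring
      _ = _ := by ring

lemma S_formula {R : Type*} [CommRing R] (a : ℕ → ℕ) (k : ℕ) :
    ∀ (T : ℝ → R) (_ : ∀ x y, T (x + y) = T x * T y) (_ : T 0 = 1)
    (_ : ∀ j < k, 1 ≤ a j),
    (∑ g ∈ BB a k, T (DD a k g)) * ∏ i ∈ Finset.range k, (T (ww a i) - 1)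
      = T (-(cc k)) * (∏ i ∈ Finset.range k, (T 1 - T (ww a i))) := by
  induction k with
  | zero =>
    intro T hT h0 h
    simp [BB_zero, DD_zero, cc]
  | succ k ih =>
    intro T hT h0 h
    have h1 := F_formula a k T hT h0 h
    have h2 := ih (fun x => T (-x)) (fun x y => by rw [← hT]; congr 1; ring) (by simp [h0])
      (fun j hj => h j (by omega))
    have h3 : ∑ g ∈ GG a (k + 1), T (DD a (k + 1) g) = ∑ g ∈ BB a (k + 1), T (DD a (k + 1) g)
        + T (-1) * ∑ g ∈ BB a k, T (-(DD a k g)) := by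
      classical
      rw [← Finset.sum_sdiff (BB_sub_succ a k h)]
      congr 1
      rw [Finset.mul_sum]
      refine Finset.sum_congr rfl fun g hg => ?_
      rw [DD_succ a k h g (BB_sub_succ a k h hg), ← hT]; rfl
    rw [h3] at h1
    simp only [neg_neg] at h2
    have p1 := prod_neg T hT h0 (fun i => (ww a i : ℝ)) k
    have p2 := prod_neg2 T hT h0 (fun i => (ww a i : ℝ)) k
    have h4 : (∑ g ∈ BB a k, T (-(DD a k g))) * ∏ i ∈ Finset.range k, (T (ww a i) - 1)
        = T (cc k) * T (-k) * ∏ i ∈ Finset.range k, (T 1 - T (ww a i)) := by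
      apply neg_one_pow_cancel k
      rw [mul_left_comm, ← p2, ← mul_assoc, h2, mul_assoc, p1]; ring
    have c1 : T (-cc (k + 1)) * T 1 = T (-1) * T (cc k) * T (-k) := by
      rw [← hT, ← hT, ← hT]; congr 1; simp only [cc]; ring
    rw [Finset.prod_range_succ] at h1 ⊢
    rw [Finset.prod_range_succ]
    set Pp := ∏ i ∈ Finset.range k, (T 1 - T (ww a i : ℝ))
    linear_combination h1 - T (-1) * (T (ww a k) - 1) * h4 + Pp * (T (ww a k) - 1) * c1

lemma cc_eq (k : ℕ) : cc k = (if Even k then (k : ℝ) / 2 + 1 else ((k : ℝ) + 1) / 2) := by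
  induction k with
  | zero => simp [cc]
  | succ k ih =>
    simp only [cc, ih, Nat.even_add_one]
    by_cases hk : Even k <;> simp [hk] <;> ring

/-- The unit circle parametrization. -/
noncomputable def ee (b : ℝ) : ℂ := Complex.exp (-2 * (Real.pi : ℂ) * Complex.I * (b : ℂ))

lemma ee_inj {b c : ℝ} (hb : b ∈ Set.Ico (0 : ℝ) 1) (hc : c ∈ Set.Ico (0 : ℝ) 1)
    (h : ee b = ee c) : b = c := by
  unfold ee at h
  rw [Complex.exp_eq_exp_iff_exists_int] at h
  obtain ⟨n, hn⟩ := h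
  have h1 : (-2 * (Real.pi : ℂ) * Complex.I) * ((b : ℂ) - c + n) = 0 := by
    linear_combination hn
  have h2 : ((b : ℂ) - c + n) = 0 := by
    rcases mul_eq_zero.1 h1 with h1 | h1
    · simp [Real.pi_ne_zero] at h1
    · exact h1
  have h3 : b - c + n = 0 := by exact_mod_cast h2
  obtain ⟨hb0, hb1⟩ := hb
  obtain ⟨hc0, hc1⟩ := hc
  have h4 : (n : ℝ) < 1 := by linarith
  have h5 : (-1 : ℝ) < n := by linarith
  have h6 : n < 1 := by exact_mod_cast h4
  have h7 : -1 < n := by exact_mod_cast h5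
  have : n = 0 := by omega
  subst this
  simp at h3
  linarith

lemma GG_Ico (a : ℕ → ℕ) (k : ℕ) {x : ℝ} (hx : x ∈ GG a k) : x ∈ Set.Ico (0 : ℝ) 1 := by
  obtain ⟨s, hs, rfl⟩ := mem_GG.1 hx
  have : (s : ℝ) < rr' a k := by exact_mod_cast hs
  constructor
  · positivity
  · rw [div_lt_one (lt_of_le_of_lt (by positivity) this)]; exact this

lemma X_pow_eq (a : ℕ → ℕ) (k : ℕ) (h : ∀ j < k, 1 ≤ a j) :
    (X : Polynomial ℂ) ^ (rr' a k) - 1 = ∏ g ∈ GG a k, (X - C (ee g)) := by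
  classical
  have hr := rr'_pos a k h
  have hinj : Set.InjOn ee (GG a k : Set ℝ) := fun x hx y hy hxy =>
    ee_inj (GG_Ico a k hx) (GG_Ico a k hy) hxy
  rw [X_pow_sub_one_eq_prod hr (Complex.isPrimitiveRoot_exp _ hr.ne'),
    ← Finset.prod_image (s := GG a k) (g := ee) (f := fun z => X - C z) hinj]
  refine Finset.prod_congr ?_ fun _ _ => rfl
  symm
  apply Finset.eq_of_subset_of_card_le
  · intro z hz
    obtain ⟨g, hg, rfl⟩ := Finset.mem_image.1 hz
    obtain ⟨s, hs, rfl⟩ := mem_GG.1 hg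
    rw [mem_nthRootsFinset hr]
    unfold ee
    rw [← Complex.exp_nat_mul, Complex.exp_eq_one_iff]
    refine ⟨-s, ?_⟩
    have : (rr' a k : ℂ) ≠ 0 := by exact_mod_cast hr.ne'
    push_cast
    field_simp
  · rw [Finset.card_image_of_injOn hinj,
      (Complex.isPrimitiveRoot_exp _ hr.ne').card_nthRootsFinset]
    unfold GG
    rw [Finset.card_image_of_injective _ (grid_inj a k h), Finset.card_range]

lemma filt_even (k : ℕ) : (Finset.range (k + 2)).filter (fun i => Even (k + 1 - i))
    = insert (k + 1) ((Finset.range (k + 1)).filter (fun i => Odd (k - i))) := by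
  ext i
  simp only [Finset.mem_filter, Finset.mem_range, Finset.mem_insert, Nat.even_iff, Nat.odd_iff]
  omega

lemma filt_odd (k : ℕ) : (Finset.range (k + 2)).filter (fun i => Odd (k + 1 - i))
    = ((Finset.range (k + 1)).filter (fun i => Even (k - i))) := by
  ext i
  simp only [Finset.mem_filter, Finset.mem_range, Nat.even_iff, Nat.odd_iff]
  omega

lemma even_odd (a : ℕ → ℕ) (k : ℕ) (h : ∀ j < k, 1 ≤ a j) :
    (∏ i ∈ (Finset.range (k + 1)).filter (fun i => Even (k - i)),
      ((X : Polynomial ℂ) ^ (rr' a i) - 1)) =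
    (∏ i ∈ (Finset.range (k + 1)).filter (fun i => Odd (k - i)),
      ((X : Polynomial ℂ) ^ (rr' a i) - 1)) * ∏ b ∈ BB a k, (X - C (ee b)) := by
  classical
  induction k with
  | zero =>
    simp [BB_zero, rr', ee]
  | succ k ih =>
    rw [filt_even, filt_odd, Finset.prod_insert (by simp), ih fun j hj => h j (by omega),
      X_pow_eq a (k + 1) h, ← Finset.prod_sdiff (BB_sub_succ a k h)]
    have : BB a (k + 1) = GG a (k + 1) \ BB a k := by
      simp only [BB]
    rw [this]
    ring

/-- Theorem 7.6: for a chain type singularity, the spectral numbers `α_j` of the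
Orlik–Randell HOR-polynomial `p` satisfy, in the group algebra `ℤ[ℝ]` (basis
elements `t^q = single q 1`), the identity
`(Σ_j t^{α_j + (m-1)/2 + 1}) ∏_k (t^{w_k} - 1) = ∏_k (t - t^{w_k})`, i.e.
`Sp(S) = Sp(f) - (m-1)/2`. -/
theorem stmt19 (m : ℕ) (a : ℕ → ℕ) (ha0 : 2 ≤ a 0)
    (ha : ∀ j, 1 ≤ j → j ≤ m → 1 ≤ a j)
    (k₀ : ℕ) (hk₀ : k₀ = 1 ∨ k₀ = 2) (hk₀m : k₀ % 2 = (m + 1) % 2)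
    (μ : ℕ) (hμ : (μ : ℤ) = mu a m)
    (p : Polynomial ℤ)
    (hp : (∏ k ∈ (Finset.range (m + 2)).filter (fun k => Odd (m + 1 - k)),
        ((X : Polynomial ℤ) ^ (rr' a k) - 1)) * p =
      (∏ k ∈ (Finset.range (m + 2)).filter (fun k => Even (m + 1 - k)),
        ((X : Polynomial ℤ) ^ (rr' a k) - 1)))
    (β : Fin μ → ℝ) (hmono : StrictMono β) (hIco : ∀ j, β j ∈ Set.Ico (0 : ℝ) 1)
    (hroot : ∀ j : Fin μ,
      (p.map (Int.castRingHom ℂ)).IsRoot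
        (Complex.exp (-2 * (Real.pi : ℂ) * Complex.I * (β j : ℂ))))
    (hall : ∀ b : ℝ, b ∈ Set.Ico (0 : ℝ) 1 →
      (p.map (Int.castRingHom ℂ)).IsRoot
        (Complex.exp (-2 * (Real.pi : ℂ) * Complex.I * (b : ℂ))) →
      ∃ j : Fin μ, β j = b)
    (α : Fin μ → ℝ)
    (hα : ∀ j : Fin μ, α j = (μ : ℝ) * β j - ((j : ℕ) + 1) + (k₀ : ℝ) / 2) :
    (∑ j : Fin μ,
        (AddMonoidAlgebra.single (α j + ((m : ℝ) - 1) / 2 + 1) 1 : AddMonoidAlgebra ℤ ℝ)) *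
      (∏ k ∈ Finset.range (m + 1),
        ((AddMonoidAlgebra.single ((ww a k : ℝ)) 1 : AddMonoidAlgebra ℤ ℝ) -
          AddMonoidAlgebra.single 0 1)) =
    ∏ k ∈ Finset.range (m + 1),
      ((AddMonoidAlgebra.single (1 : ℝ) 1 : AddMonoidAlgebra ℤ ℝ) -
        AddMonoidAlgebra.single ((ww a k : ℝ)) 1) := by
  classical
  have haj : ∀ j < m + 1, 1 ≤ a j := by
    intro j hj
    rcases Nat.eq_zero_or_pos j with rfl | hj0
    · omega
    · exact ha j hj0 (by omega)
  have hpC : p.map (Int.castRingHom ℂ) = ∏ b ∈ BB a (m + 1), (X - C (ee b)) := by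
    have h1 := congrArg (Polynomial.map (Int.castRingHom ℂ)) hp
    rw [Polynomial.map_mul, Polynomial.map_prod, Polynomial.map_prod] at h1
    simp only [Polynomial.map_sub, Polynomial.map_pow, Polynomial.map_X, Polynomial.map_one] at h1
    rw [even_odd a (m + 1) haj] at h1
    refine mul_left_cancel₀ ?_ h1
    rw [Finset.prod_ne_zero_iff]
    intro i hi
    have hi' : i < m + 2 := by simpa using (Finset.mem_filter.1 hi).1
    exact X_pow_sub_C_ne_zero (rr'_pos a i fun j hj => haj j (by omega)) (1 : ℂ)
  have hmem : ∀ b : ℝ, b ∈ Set.Ico (0 : ℝ) 1 →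
      ((p.map (Int.castRingHom ℂ)).IsRoot
        (Complex.exp (-2 * (Real.pi : ℂ) * Complex.I * (b : ℂ))) ↔ b ∈ BB a (m + 1)) := by
    intro b hb
    change (p.map (Int.castRingHom ℂ)).IsRoot (ee b) ↔ _
    rw [hpC, Polynomial.IsRoot.def, Polynomial.eval_prod, Finset.prod_eq_zero_iff]
    simp only [eval_sub, eval_X, eval_C, sub_eq_zero]
    constructor
    · rintro ⟨c, hc, hbc⟩
      rw [ee_inj hb (GG_Ico a _ (BB_sub_GG a _ hc)) hbc]; exact hc
    · intro h; exact ⟨b, h, rfl⟩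
  have hB : BB a (m + 1) = Finset.univ.image β := by
    ext b
    simp only [Finset.mem_image, Finset.mem_univ, true_and]
    constructor
    · intro h
      have hb := GG_Ico a _ (BB_sub_GG a _ h)
      exact hall b hb ((hmem b hb).2 h)
    · rintro ⟨j, rfl⟩
      exact (hmem _ (hIco j)).1 (hroot j)
  have hN : ∀ j, NN a (m + 1) (β j) = (j : ℕ) + 1 := by
    intro j
    have : (BB a (m + 1)).filter (fun b => b ≤ β j) = (Finset.Iic j).image β := by
      ext b
      rw [hB]
      simp only [Finset.mem_filter, Finset.mem_image, Finset.mem_univ, true_and, Finset.mem_Iic]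
      constructor
      · rintro ⟨⟨i, rfl⟩, hi⟩
        exact ⟨i, hmono.le_iff_le.1 hi, rfl⟩
      · rintro ⟨i, hi, rfl⟩
        exact ⟨⟨i, rfl⟩, hmono.le_iff_le.2 hi⟩
    have h2 : NN a (m + 1) (β j) = ((BB a (m + 1)).filter (fun b => b ≤ β j)).card := by
      unfold NN; congr!
    rw [h2, this, Finset.card_image_of_injective _ hmono.injective, Fin.card_Iic]
  have hcc : cc (m + 1) = ((k₀ : ℝ) + m + 1) / 2 := by
    rw [cc_eq]
    split_ifs with he
    · rw [Nat.even_iff] at he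
      have : k₀ = 2 := by omega
      subst this; push_cast; ring
    · rw [Nat.even_iff] at he
      have : k₀ = 1 := by omega
      subst this; push_cast; ring
  have hμ' : ((mu' a (m + 1) : ℤ) : ℝ) = (μ : ℝ) := by
    simp only [mu']
    rw [← hμ]; simp
  set T : ℝ → AddMonoidAlgebra ℤ ℝ := fun x => AddMonoidAlgebra.single x 1 with hTdef
  have hT : ∀ x y, T (x + y) = T x * T y := by
    intro x y
    simp [hTdef, AddMonoidAlgebra.single_mul_single]
  have h0 : T 0 = 1 := rfl
  have key := S_formula a (m + 1) T hT h0 haj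
  have hS : (∑ j : Fin μ,
      (AddMonoidAlgebra.single (α j + ((m : ℝ) - 1) / 2 + 1) 1 : AddMonoidAlgebra ℤ ℝ))
      = T (cc (m + 1)) * ∑ g ∈ BB a (m + 1), T (DD a (m + 1) g) := by
    rw [hB, Finset.sum_image (fun x _ y _ h => hmono.injective h), Finset.mul_sum]
    refine Finset.sum_congr rfl fun j _ => ?_
    rw [← hT]
    change T _ = T _
    congr 1
    unfold DD
    rw [hN, hα, hμ', hcc]
    push_cast; ring
  rw [hS]
  change (T (cc (m + 1)) * ∑ g ∈ BB a (m + 1), T (DD a (m + 1) g)) *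
    (∏ k ∈ Finset.range (m + 1), (T (ww a k) - T 0)) =
      ∏ k ∈ Finset.range (m + 1), (T 1 - T (ww a k))
  rw [h0, mul_assoc, key, ← mul_assoc, ← hT, add_neg_cancel, h0, one_mul]
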